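/- Let F = (ν_j)_{j∈J} be a family of signed charges on a semi-ring 𝒮 satisfying the admissibility hypothesis, with each ν_j countably sub-additive. Suppose there is a finite (real-valued, nonnegative, countably additive) measure λ on 𝒮 such that μ_F ≥ -λ pointwise. Then μ_F is countably additive, i.e. μ_F is a signed measure on 𝒮. -/

import Mathlib

/-!
Write `f C = sup_j ν_j C`, so that `μ = supFun S ν` is the supremum of the sums of `f` over finite
partitions.  As `f` is finitely subadditive, `μ` is finitely additive: partitions of the pieces
glue to a partition of the union, and a partition of the union can be intersected with the pieces.

For countable additivity, pass to `κ = μ + λ`, a `[0, ∞]`-valued additive content.  Such a content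
is countably additive as soon as it is countably subadditive, and for that it is enough to show
`ν_j C + λ C ≤ ∑ κ (C_n)` whenever `C = ⋃ C_n` disjointly: summing over the cells `C` of a
partition of `A` gives `κ A ≤ ∑ κ (A_n)`.  If the right-hand side is infinite there is nothing to
prove.  Otherwise `ν_j (C_n) ≤ κ (C_n) - λ (C_n)`, where the majorant is a summable real sequence;
hence `ν_j (C_n)` is genuinely summable in `EReal` and countable subadditivity of `ν_j`
applies.  (Without such a majorant, `∑' n, ν_j (C_n)` might be the junk value `0`.)
Subtracting the real convergent series `∑ λ (A_n)` from `∑ κ (A_n)` gives the result for `μ`.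
-/

open MeasureTheory Set
open scoped ENNReal NNReal BigOperators

namespace SignedCharges

variable {Ω : Type*}

/-- `P` is a finite partition of `A` by elements of the family `S`. -/
def IsPartition (S : Set (Set Ω)) (A : Set Ω) (P : Finset (Set Ω)) : Prop :=
  ↑P ⊆ S ∧ (P : Set (Set Ω)).PairwiseDisjoint id ∧ ⋃₀ ↑P = A

/-- The partition-supremum `μ_F` of a family `F = (ν j)` of `EReal`-valued set functions:
`μ_F(A) = sup` over finite partitions `Π` of `A` by elements of `S` of `Σ_{C ∈ Π} sup_j ν j C`. -/
noncomputable def supFun {J : Type*} (S : Set (Set Ω)) (ν : J → Set Ω → EReal)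
    (A : Set Ω) : EReal :=
  ⨆ P : Finset (Set Ω), ⨆ _ : IsPartition S A P, ∑ C ∈ P, ⨆ j, ν j C

/-- The admissibility hypothesis: `sup_j ν j A > -∞` for every `A ∈ S`. -/
def Admissible {J : Type*} (S : Set (Set Ω)) (ν : J → Set Ω → EReal) : Prop :=
  ∀ A ∈ S, ⊥ < ⨆ j, ν j A

/-- An `EReal`-valued signed charge on `S`: vanishes on `∅`, finitely additive on finite
disjoint unions within `S`, and omits at least one of the values `+∞`, `-∞` on `S`. -/
structure IsCharge (S : Set (Set Ω)) (μ : Set Ω → EReal) : Prop where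
  empty : μ ∅ = 0
  additive : ∀ (n : ℕ) (A : Fin n → Set Ω), (∀ i, A i ∈ S) →
    Pairwise (Function.onFun Disjoint A) → (⋃ i, A i) ∈ S → μ (⋃ i, A i) = ∑ i, μ (A i)
  omits : (∀ A ∈ S, μ A ≠ ⊤) ∨ (∀ A ∈ S, μ A ≠ ⊥)

/-- A finite (real-valued) signed charge on `S`. -/
structure IsRealCharge (S : Set (Set Ω)) (μ : Set Ω → ℝ) : Prop where
  empty : μ ∅ = 0
  additive : ∀ (n : ℕ) (A : Fin n → Set Ω), (∀ i, A i ∈ S) →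
    Pairwise (Function.onFun Disjoint A) → (⋃ i, A i) ∈ S → μ (⋃ i, A i) = ∑ i, μ (A i)

/-- Countable additivity for a real-valued set function (unconditional convergence). -/
def CountablyAdditiveR (S : Set (Set Ω)) (μ : Set Ω → ℝ) : Prop :=
  ∀ A : ℕ → Set Ω, (∀ n, A n ∈ S) → Pairwise (Function.onFun Disjoint A) →
    (⋃ n, A n) ∈ S → HasSum (fun n => μ (A n)) (μ (⋃ n, A n))

/-- Countable sub-additivity for an `EReal`-valued set function. -/
def CountablySubadditiveE (S : Set (Set Ω)) (μ : Set Ω → EReal) : Prop :=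
  ∀ A : ℕ → Set Ω, (∀ n, A n ∈ S) → Pairwise (Function.onFun Disjoint A) →
    (⋃ n, A n) ∈ S → μ (⋃ n, A n) ≤ ∑' n, μ (A n)

/-- Countable additivity for an `EReal`-valued set function. -/
def CountablyAdditiveE (S : Set (Set Ω)) (μ : Set Ω → EReal) : Prop :=
  ∀ A : ℕ → Set Ω, (∀ n, A n ∈ S) → Pairwise (Function.onFun Disjoint A) →
    (⋃ n, A n) ∈ S → μ (⋃ n, A n) = ∑' n, μ (A n)

/-- `μ⁺ = μ ∨ 0` : sup over finite partitions of `Σ_{C} max (μ C) 0`. -/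
noncomputable def pos (S : Set (Set Ω)) (μ : Set Ω → EReal) (A : Set Ω) : EReal :=
  ⨆ P : Finset (Set Ω), ⨆ _ : IsPartition S A P, ∑ C ∈ P, max (μ C) 0

/-- `μ⁻ = (-μ) ∨ 0` : sup over finite partitions of `Σ_{C} max (-μ C) 0`. -/
noncomputable def neg (S : Set (Set Ω)) (μ : Set Ω → EReal) (A : Set Ω) : EReal :=
  ⨆ P : Finset (Set Ω), ⨆ _ : IsPartition S A P, ∑ C ∈ P, max (-μ C) 0

/-- The variation `|μ|` : sup over finite partitions of `Σ_{C} |μ C|`. -/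
noncomputable def var (S : Set (Set Ω)) (μ : Set Ω → EReal) (A : Set Ω) : EReal :=
  ⨆ P : Finset (Set Ω), ⨆ _ : IsPartition S A P, ∑ C ∈ P, max (μ C) (-μ C)

/-- The infimum `α ∧ β` of two nonnegative charges:
inf over finite partitions of `Σ_{C} min (α C) (β C)`. -/
noncomputable def infC (S : Set (Set Ω)) (α β : Set Ω → EReal) (A : Set Ω) : EReal :=
  ⨅ P : Finset (Set Ω), ⨅ _ : IsPartition S A P, ∑ C ∈ P, min (α C) (β C)

/-- The ring generated by a semi-ring: finite unions of elements of `S`. -/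
def genRing (S : Set (Set Ω)) : Set (Set Ω) :=
  {A | ∃ P : Finset (Set Ω), ↑P ⊆ S ∧ A = ⋃₀ ↑P}

/-- Coercion of a real-valued set function to an `EReal`-valued one. -/
def toE (μ : Set Ω → ℝ) : Set Ω → EReal := fun A => (μ A : EReal)

/-- `μ` has finite variation on `S`. -/
def FiniteVar (S : Set (Set Ω)) (μ : Set Ω → ℝ) : Prop :=
  ∀ A ∈ S, var S (toE μ) A ≠ ⊤

/-! ### Sums in `EReal` -/

/-- Addition in `EReal` distributes over suprema far enough to bound `e + ⨆ p, v p`; this is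
unconditional because `⊥` is absorbing. -/
lemma add_iSup_le_of_forall {ι : Type*} {v : ι → EReal} {e c : EReal}
    (h : ∀ p, e + v p ≤ c) : e + ⨆ p, v p ≤ c := by
  refine EReal.add_le_of_forall_lt fun a ha b hb => ?_
  obtain ⟨p, hp⟩ := lt_iSup_iff.1 hb
  exact (add_le_add ha.le hp.le).trans (h p)

/-- A finite sum of suprema is bounded by `c` as soon as all sums of simultaneously chosen members
are; the constant `d` carries the terms already chosen. -/
lemma add_sum_iSup_le {ι : Type*} {T : ι → Type*} (hT : ∀ i, Nonempty (T i))
    (v : ∀ i, T i → EReal) (c : EReal) (s : Finset ι) :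
    ∀ d : EReal, (∀ g : ∀ i, T i, d + ∑ i ∈ s, v i (g i) ≤ c) →
      d + ∑ i ∈ s, ⨆ p, v i p ≤ c := by
  classical
  induction s using Finset.induction_on with
  | empty =>
    intro d h
    simpa using h fun i => (hT i).some
  | insert a s ha ih =>
    intro d h
    rw [Finset.sum_insert ha, add_comm (⨆ p, v a p), ← add_assoc]
    refine add_iSup_le_of_forall fun p => ?_
    rw [add_right_comm]
    refine ih (d + v a p) fun g => ?_
    have := h (Function.update g a p)
    rw [Finset.sum_insert ha, Function.update_self, ← add_assoc] at this
    convert this using 3 with i hi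
    rw [Function.update_of_ne (ne_of_mem_of_not_mem hi ha)]

lemma coe_sum_real {ι : Type*} (s : Finset ι) (r : ι → ℝ) :
    ((∑ i ∈ s, r i : ℝ) : EReal) = ∑ i ∈ s, (r i : EReal) := by
  classical
  induction s using Finset.induction_on with
  | empty => simp
  | insert a s ha ih => rw [Finset.sum_insert ha, Finset.sum_insert ha, EReal.coe_add, ih]

lemma coe_sum_ennreal {ι : Type*} (s : Finset ι) (r : ι → ℝ≥0∞) :
    ((∑ i ∈ s, r i : ℝ≥0∞) : EReal) = ∑ i ∈ s, (r i : EReal) := by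
  classical
  induction s using Finset.induction_on with
  | empty => simp
  | insert a s ha ih => rw [Finset.sum_insert ha, Finset.sum_insert ha, EReal.coe_ennreal_add, ih]

lemma neg_coe_sum_ennreal {ι : Type*} (s : Finset ι) (r : ι → ℝ≥0∞) :
    -((∑ i ∈ s, r i : ℝ≥0∞) : EReal) = ∑ i ∈ s, -(r i : EReal) := by
  classical
  induction s using Finset.induction_on with
  | empty => simp
  | insert a s ha ih =>
    rw [Finset.sum_insert ha, Finset.sum_insert ha, EReal.coe_ennreal_add, ← ih,
      EReal.neg_add (Or.inl (EReal.coe_ennreal_ne_bot _)) (Or.inr (EReal.coe_ennreal_ne_bot _)),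
      sub_eq_add_neg]

lemma hasSum_coe_ennreal (k : ℕ → ℝ≥0∞) :
    HasSum (fun n => (k n : EReal)) ((∑' n, k n : ℝ≥0∞) : EReal) := by
  have h : HasSum k (∑' n, k n) := ENNReal.summable.hasSum
  unfold HasSum at h ⊢
  simp_rw [← coe_sum_ennreal]
  exact EReal.tendsto_coe_ennreal.2 h

lemma hasSum_neg_coe_ennreal (k : ℕ → ℝ≥0∞) :
    HasSum (fun n => -(k n : EReal)) (-((∑' n, k n : ℝ≥0∞) : EReal)) := by
  have h : HasSum k (∑' n, k n) := ENNReal.summable.hasSum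
  unfold HasSum at h ⊢
  simp_rw [← neg_coe_sum_ennreal]
  exact (continuous_neg.tendsto _).comp (EReal.tendsto_coe_ennreal.2 h)

/-- `EReal` is not a topological additive monoid, but addition is continuous where one summand is
real, so a real convergent series may be added to any convergent series. -/
lemma hasSum_coe_add {r : ℕ → ℝ} {R : ℝ} (hr : HasSum r R) {x : ℕ → EReal} {X : EReal}
    (hx : HasSum x X) : HasSum (fun n => (r n : EReal) + x n) ((R : EReal) + X) := by
  unfold HasSum at hr hx ⊢
  simp_rw [Finset.sum_add_distrib, ← coe_sum_real]
  have hc := EReal.continuousAt_add (p := ((R : EReal), X)) (Or.inl (EReal.coe_ne_top _))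
    (Or.inl (EReal.coe_ne_bot _))
  exact hc.tendsto.comp ((EReal.tendsto_coe.2 hr).prodMk_nhds hx)

/-- A sequence dominated by a summable real sequence is summable in `EReal` (possibly with sum
`⊥`), and its sum is dominated accordingly. -/
lemma tsum_le_of_le_real {r : ℕ → ℝ} {R : ℝ} (hr : HasSum r R) {a : ℕ → EReal}
    (ha : ∀ n, a n ≤ r n) : ∑' n, a n ≤ (R : EReal) := by
  have hb : ∀ n, a n = (r n : EReal) + -(((r n : EReal) - a n).toENNReal : EReal) := by
    intro n
    have h0 : 0 ≤ (r n : EReal) - a n :=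
      (EReal.sub_nonneg (Or.inl (EReal.coe_ne_top _)) (Or.inl (EReal.coe_ne_bot _))).2 (ha n)
    rw [EReal.coe_toENNReal h0]
    have := ha n
    induction h : a n with
    | bot => simp
    | top => rw [h] at this; simp at this
    | coe x => norm_cast; ring
  have hs := hasSum_coe_add hr
    (hasSum_neg_coe_ennreal fun n => ((r n : EReal) - a n).toENNReal)
  simp_rw [← hb] at hs
  rw [hs.tsum_eq]
  calc _ ≤ (R : EReal) + 0 := by
        gcongr
        rw [EReal.neg_le, neg_zero]
        exact EReal.coe_ennreal_nonneg _
    _ = R := add_zero _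

/-! ### Finite additivity of the partition supremum -/

/-- The additive content attached to a set function which is additive on finite indexed families. -/
def contentOfFin {Ω M : Type*} [AddCommMonoid M] {S : Set (Set Ω)} (m : Set Ω → M)
    (h0 : m ∅ = 0)
    (h : ∀ (n : ℕ) (A : Fin n → Set Ω), (∀ i, A i ∈ S) →
      Pairwise (Function.onFun Disjoint A) → (⋃ i, A i) ∈ S → m (⋃ i, A i) = ∑ i, m (A i)) :
    AddContent M S where
  toFun := m
  empty' := h0
  sUnion' I hI hd hU := by
    have e := I.equivFin
    have hU' : ⋃₀ (I : Set (Set Ω)) = ⋃ i, ((e.symm i : I) : Set Ω) := by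
      rw [sUnion_eq_iUnion]
      exact (e.symm.surjective.iUnion_comp (fun u : I => (u : Set Ω))).symm
    rw [hU'] at hU ⊢
    rw [h _ _ (fun i => hI (e.symm i).2) (fun i j hij => ?_) hU]
    · rw [e.symm.sum_comp (fun u : I => m u), Finset.sum_coe_sort I m]
    · exact hd (e.symm i).2 (e.symm j).2 fun h => hij (e.symm.injective (Subtype.ext h))

section Finite

variable {Ω J : Type*} {S : Set (Set Ω)} {ν : J → Set Ω → EReal}

lemma iSup_empty_eq_zero (hS : IsSetSemiring S) (hν : ∀ j, IsCharge S (ν j))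
    (hadm : Admissible S ν) : ⨆ j, ν j ∅ = 0 := by
  have : Nonempty J := by
    by_contra h
    rw [not_nonempty_iff] at h
    have := hadm ∅ hS.empty_mem
    simp at this
  simp [(hν _).empty]

lemma isPartition_singleton {A : Set Ω} (hA : A ∈ S) : IsPartition S A {A} :=
  ⟨by simpa using hA, by simp, by simp⟩

/-- Indexed families may be used in place of partitions; repetitions can only involve `∅`, where
the summand vanishes. -/
lemma sum_le_supFun (h0 : ⨆ j, ν j ∅ = 0) {ι : Type*} (s : Finset ι) (B : ι → Set Ω)
    (hB : ∀ i ∈ s, B i ∈ S) (hd : (s : Set ι).PairwiseDisjoint B) :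
    ∑ i ∈ s, ⨆ j, ν j (B i) ≤ supFun S ν (⋃ i ∈ s, B i) := by
  classical
  have hP : IsPartition S (⋃ i ∈ s, B i) (s.image B) := by
    refine ⟨?_, ?_, ?_⟩
    · intro C hC
      obtain ⟨i, hi, rfl⟩ := Finset.mem_image.1 (Finset.mem_coe.1 hC)
      exact hB i hi
    · rintro C hC D hD hCD
      obtain ⟨i, hi, rfl⟩ := Finset.mem_image.1 (Finset.mem_coe.1 hC)
      obtain ⟨k, hk, rfl⟩ := Finset.mem_image.1 (Finset.mem_coe.1 hD)
      exact hd hi hk fun h => hCD (by rw [h])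
    · rw [Finset.coe_image, sUnion_image]
      rfl
  calc ∑ i ∈ s, ⨆ j, ν j (B i) = ∑ C ∈ s.image B, ⨆ j, ν j C :=
        (Finset.sum_image_of_disjoint (g := fun C => ⨆ j, ν j C) h0 hd).symm
    _ ≤ _ := le_iSup₂_of_le (f := fun P (_ : IsPartition S (⋃ i ∈ s, B i) P) =>
        ∑ C ∈ P, ⨆ j, ν j C) (s.image B) hP le_rfl

/-- Partitions of disjoint pieces glue, so the partition supremum is superadditive. -/
lemma sum_supFun_le (h0 : ⨆ j, ν j ∅ = 0) {ι : Type*} (s : Finset ι)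
    (A : ι → Set Ω) (hd : (s : Set ι).PairwiseDisjoint A) (hA : ∀ i ∈ s, A i ∈ S) :
    ∑ i ∈ s, supFun S ν (A i) ≤ supFun S ν (⋃ i ∈ s, A i) := by
  classical
  -- The pieces indexed by `s` as a subtype, so that every index has a partition to choose.
  rw [← Finset.sum_coe_sort s fun i => supFun S ν (A i)]
  have key := add_sum_iSup_le (ι := s) (T := fun i => {P // IsPartition S (A i) P})
    (fun i => ⟨⟨_, isPartition_singleton (hA i i.2)⟩⟩)
    (fun i P => ∑ C ∈ P.1, ⨆ j, ν j C) (supFun S ν (⋃ i ∈ s, A i)) Finset.univ 0 ?_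
  · rw [zero_add] at key
    simpa only [supFun, iSup_subtype] using key
  intro g
  rw [zero_add, Finset.sum_sigma' (Finset.univ : Finset s) (fun i => (g i).1)
    (fun _ C => ⨆ j, ν j C)]
  have hsub : ∀ i : s, ∀ C ∈ (g i).1, C ⊆ A i := fun i C hC => by
    have := (g i).2.2.2
    exact (subset_sUnion_of_mem (Finset.mem_coe.2 hC)).trans this.subset
  have := sum_le_supFun (S := S) h0 (Finset.univ.sigma fun i => (g i).1)
    (fun x : (_ : s) × Set Ω => x.2)
    (fun x hx => (g x.1).2.1 (Finset.mem_sigma.1 hx).2) ?_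
  · convert this using 2
    ext x
    simp only [mem_iUnion, Finset.mem_sigma, Finset.mem_univ, true_and, exists_prop]
    constructor
    · rintro ⟨i, hi, hx⟩
      have hx' : x ∈ ⋃₀ ((g ⟨i, hi⟩).1 : Set (Set Ω)) := by rw [(g ⟨i, hi⟩).2.2.2]; exact hx
      obtain ⟨C, hC, hxC⟩ := hx'
      exact ⟨⟨⟨i, hi⟩, C⟩, hC, hxC⟩
    · rintro ⟨⟨i, C⟩, hC, hxC⟩
      exact ⟨i, i.2, hsub i C hC hxC⟩
  · rintro ⟨i, C⟩ hC ⟨k, D⟩ hD hne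
    have hC' := (Finset.mem_sigma.1 hC).2
    have hD' := (Finset.mem_sigma.1 hD).2
    by_cases hik : i = k
    · subst hik
      exact (g i).2.2.1 hC' hD' fun h => hne (by simp only at h; rw [h])
    · exact (hd i.2 k.2 fun h => hik (Subtype.ext h)).mono (hsub i C hC') (hsub k D hD')

/-- Intersecting a partition of `⋃ A_i` with each `A_i` shows that the partition supremum is
finitely subadditive. -/
lemma supFun_le_sum (hS : IsSetSemiring S) (hν : ∀ j, IsCharge S (ν j))
    (h0 : ⨆ j, ν j ∅ = 0) {ι : Type*} (s : Finset ι)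
    (A : ι → Set Ω) (hd : (s : Set ι).PairwiseDisjoint A) (hA : ∀ i ∈ s, A i ∈ S) :
    supFun S ν (⋃ i ∈ s, A i) ≤ ∑ i ∈ s, supFun S ν (A i) := by
  refine iSup₂_le fun P hP => ?_
  have hcell : ∀ C ∈ P, ⨆ j, ν j C ≤ ∑ i ∈ s, ⨆ j, ν j (C ∩ A i) := by
    intro C hC
    refine iSup_le fun j => ?_
    have hCU : C = ⋃ i ∈ s, C ∩ A i := by
      have : C ⊆ ⋃ i ∈ s, A i := (subset_sUnion_of_mem (Finset.mem_coe.2 hC)).trans hP.2.2.subset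
      rw [← inter_iUnion₂, inter_eq_left.2 this]
    have hadd := addContent_biUnion (m := contentOfFin (ν j) (hν j).empty (hν j).additive)
      (a := s) (f := fun i => C ∩ A i) (fun i hi => hS.inter_mem _ (hP.1 hC) _ (hA i hi))
      (fun i hi k hk hik => (hd hi hk hik).mono inter_subset_right inter_subset_right)
      (by rw [← hCU]; exact hP.1 hC)
    rw [← hCU] at hadd
    change ν j C = ∑ i ∈ s, ν j (C ∩ A i) at hadd
    rw [hadd]
    exact Finset.sum_le_sum fun i _ => le_iSup (fun j => ν j (C ∩ A i)) j
  refine (Finset.sum_le_sum hcell).trans ?_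
  rw [Finset.sum_comm]
  refine Finset.sum_le_sum fun i hi => ?_
  have hAi : A i = ⋃ C ∈ P, C ∩ A i := by
    have : A i ⊆ ⋃ C ∈ P, C := by
      have h1 : (⋃ C ∈ P, C) = ⋃₀ (P : Set (Set Ω)) := by rw [sUnion_eq_biUnion]; rfl
      rw [h1, hP.2.2]
      exact subset_biUnion_of_mem (u := A) (Finset.mem_coe.2 hi)
    rw [← iUnion₂_inter, inter_eq_right.2 this]
  have := sum_le_supFun (S := S) h0 P (fun C => C ∩ A i)
    (fun C hC => hS.inter_mem _ (hP.1 hC) _ (hA i hi))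
    (fun C hC D hD hCD => (hP.2.1 hC hD hCD).mono inter_subset_left inter_subset_left)
  rwa [← hAi] at this

lemma supFun_biUnion (hS : IsSetSemiring S) (hν : ∀ j, IsCharge S (ν j))
    (hadm : Admissible S ν) {ι : Type*} (s : Finset ι)
    (A : ι → Set Ω) (hd : (s : Set ι).PairwiseDisjoint A) (hA : ∀ i ∈ s, A i ∈ S) :
    supFun S ν (⋃ i ∈ s, A i) = ∑ i ∈ s, supFun S ν (A i) :=
  have h0 := iSup_empty_eq_zero hS hν hadm
  le_antisymm (supFun_le_sum hS hν h0 s A hd hA) (sum_supFun_le h0 s A hd hA)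

lemma charge_le_supFun {A : Set Ω} (hA : A ∈ S) (j : J) : ν j A ≤ supFun S ν A :=
  le_iSup₂_of_le (f := fun P (_ : IsPartition S A P) => ∑ C ∈ P, ⨆ j, ν j C) {A}
    (isPartition_singleton hA) (by simpa using le_iSup (fun j => ν j A) j)

end Finite

/-! ### The shifted content -/

section Shift

variable {Ω J : Type*} {S : Set (Set Ω)} {ν : J → Set Ω → EReal} {lam : Set Ω → ℝ}

lemma coe_toENNReal_shift (hge : ∀ A ∈ S, -(lam A : EReal) ≤ supFun S ν A) {A : Set Ω}
    (hA : A ∈ S) :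
    ((supFun S ν A + lam A).toENNReal : EReal) = supFun S ν A + lam A := by
  refine EReal.coe_toENNReal ?_
  calc (0 : EReal) = -(lam A : EReal) + lam A := by norm_cast; simp
    _ ≤ _ := by gcongr; exact hge A hA

/-- The content `μ + λ`, with values in `[0, ∞]`, where `μ` is the partition supremum and
`μ ≥ -λ` on `S`, so that `toENNReal` truncates nothing there. -/
noncomputable def shift (hS : IsSetSemiring S) (hν : ∀ j, IsCharge S (ν j))
    (hadm : Admissible S ν) (hlam : IsRealCharge S lam)
    (hge : ∀ A ∈ S, -(lam A : EReal) ≤ supFun S ν A) : AddContent ℝ≥0∞ S where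
  toFun A := (supFun S ν A + lam A).toENNReal
  empty' := by
    have := supFun_biUnion hS hν hadm (∅ : Finset ℕ) (fun _ => ∅) (by simp) (by simp)
    simp at this
    simp [this, hlam.empty]
  sUnion' I hI hd hU := by
    have h1 := supFun_biUnion hS hν hadm I id hd (fun i hi => hI hi)
    have h2 := addContent_sUnion (m := contentOfFin lam hlam.empty hlam.additive) hI hd hU
    change lam _ = ∑ u ∈ I, lam u at h2
    have h3 : (⋃ i ∈ I, id i) = ⋃₀ (I : Set (Set Ω)) := by rw [sUnion_eq_biUnion]; rfl
    rw [h3] at h1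
    rw [← EReal.coe_ennreal_eq_coe_ennreal_iff, coe_toENNReal_shift hge hU, coe_sum_ennreal,
      Finset.sum_congr rfl fun u hu => coe_toENNReal_shift hge (hI hu), Finset.sum_add_distrib,
      h1, h2, coe_sum_real]
    rfl

variable (hS : IsSetSemiring S) (hν : ∀ j, IsCharge S (ν j))
    (hadm : Admissible S ν) (hlam : IsRealCharge S lam)
    (hge : ∀ A ∈ S, -(lam A : EReal) ≤ supFun S ν A)

lemma coe_shift {A : Set Ω} (hA : A ∈ S) :
    (shift hS hν hadm hlam hge A : EReal) = supFun S ν A + lam A :=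
  coe_toENNReal_shift hge hA

/-- Countable subadditivity of `ν j`, transferred to the shifted content.  When the right-hand side
is finite it provides a summable real majorant for `ν j (A n)`. -/
lemma charge_add_le_tsum_shift (hsub : ∀ j, CountablySubadditiveE S (ν j))
    (hlamca : CountablyAdditiveR S lam) (j : J) (A : ℕ → Set Ω) (hA : ∀ n, A n ∈ S)
    (hd : Pairwise (Function.onFun Disjoint A)) (hU : (⋃ n, A n) ∈ S) :
    ν j (⋃ n, A n) + lam (⋃ n, A n) ≤
      ((∑' n, shift hS hν hadm hlam hge (A n) : ℝ≥0∞) : EReal) := by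
  set κ := shift hS hν hadm hlam hge with hκ
  by_cases htop : ∑' n, κ (A n) = ⊤
  · simp [htop]
  have hfin : ∀ n, κ (A n) ≠ ⊤ := ENNReal.ne_top_of_tsum_ne_top htop
  have hr : HasSum (fun n => (κ (A n)).toReal - lam (A n))
      ((∑' n, κ (A n)).toReal - lam (⋃ n, A n)) := by
    refine HasSum.sub ?_ (hlamca A hA hd hU)
    rw [ENNReal.tsum_toReal_eq hfin]
    exact (ENNReal.summable_toReal htop).hasSum
  have hle : ν j (⋃ n, A n) ≤ (((∑' n, κ (A n)).toReal - lam (⋃ n, A n) : ℝ) : EReal) := by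
    refine (hsub j A hA hd hU).trans (tsum_le_of_le_real hr fun n => ?_)
    have h1 : ((κ (A n)).toReal : EReal) = supFun S ν (A n) + lam (A n) := by
      rw [EReal.coe_ennreal_toReal (hfin n), hκ, coe_shift hS hν hadm hlam hge (hA n)]
    rw [EReal.coe_sub, h1, EReal.add_sub_cancel_right]
    exact charge_le_supFun (hA n) j
  calc _ ≤ (((∑' n, κ (A n)).toReal - lam (⋃ n, A n) : ℝ) : EReal) + lam (⋃ n, A n) := by
        gcongr
    _ = ((∑' n, κ (A n)).toReal : EReal) := by norm_cast; ring
    _ = _ := EReal.coe_ennreal_toReal htop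

lemma shift_iUnion_le (hsub : ∀ j, CountablySubadditiveE S (ν j))
    (hlamca : CountablyAdditiveR S lam) (A : ℕ → Set Ω) (hA : ∀ n, A n ∈ S)
    (hU : (⋃ n, A n) ∈ S) (hd : Pairwise (Function.onFun Disjoint A)) :
    shift hS hν hadm hlam hge (⋃ n, A n) ≤ ∑' n, shift hS hν hadm hlam hge (A n) := by
  set κ := shift hS hν hadm hlam hge with hκ
  have hbound : ∀ P, IsPartition S (⋃ n, A n) P →
      ∑ C ∈ P, ⨆ j, ν j C ≤ ((∑' n, κ (A n) : ℝ≥0∞) : EReal) - lam (⋃ n, A n) := by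
    intro P hP
    have hcell : ∀ C ∈ P, (⨆ j, ν j C) + lam C ≤ ((∑' n, κ (C ∩ A n) : ℝ≥0∞) : EReal) := by
      intro C hC
      have hCU : (⋃ n, C ∩ A n) = C := by
        have : C ⊆ ⋃ n, A n := (subset_sUnion_of_mem (Finset.mem_coe.2 hC)).trans hP.2.2.subset
        rw [← inter_iUnion, inter_eq_left.2 this]
      rw [add_comm]
      refine add_iSup_le_of_forall fun j => ?_
      have := charge_add_le_tsum_shift hS hν hadm hlam hge hsub hlamca j (fun n => C ∩ A n)
        (fun n => hS.inter_mem _ (hP.1 hC) _ (hA n))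
        (fun i k hik => (hd hik).mono inter_subset_right inter_subset_right)
        (by rw [hCU]; exact hP.1 hC)
      rw [hCU] at this
      rwa [add_comm]
    have hswap : ∑ C ∈ P, ∑' n, κ (C ∩ A n) = ∑' n, κ (A n) := by
      rw [← Summable.tsum_finsetSum fun _ _ => ENNReal.summable]
      congr 1 with n
      have hAn : A n = ⋃ C ∈ P, C ∩ A n := by
        have : A n ⊆ ⋃ C ∈ P, C := by
          have h1 : (⋃ C ∈ P, C) = ⋃₀ (P : Set (Set Ω)) := by rw [sUnion_eq_biUnion]; rfl
          rw [h1, hP.2.2]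
          exact subset_iUnion A n
        rw [← iUnion₂_inter, inter_eq_right.2 this]
      have := addContent_biUnion (m := κ) (a := P) (f := fun C => C ∩ A n)
        (fun C hC => hS.inter_mem _ (hP.1 hC) _ (hA n))
        (fun C hC D hD hCD => (hP.2.1 hC hD hCD).mono inter_subset_left inter_subset_left)
        (by rw [← hAn]; exact hA n)
      rw [← hAn] at this
      exact this.symm
    have hlamP : lam (⋃ n, A n) = ∑ C ∈ P, lam C := by
      have := addContent_sUnion (m := contentOfFin lam hlam.empty hlam.additive) hP.1 hP.2.1
        (by rw [hP.2.2]; exact hU)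
      rw [hP.2.2] at this
      exact this
    rw [EReal.le_sub_iff_add_le (Or.inl (EReal.coe_ne_bot _)) (Or.inl (EReal.coe_ne_top _)),
      hlamP, coe_sum_real, ← Finset.sum_add_distrib, ← hswap, coe_sum_ennreal]
    exact Finset.sum_le_sum hcell
  rw [← EReal.coe_ennreal_le_coe_ennreal_iff, hκ, coe_shift hS hν hadm hlam hge hU,
    ← EReal.le_sub_iff_add_le (Or.inl (EReal.coe_ne_bot _)) (Or.inl (EReal.coe_ne_top _))]
  exact iSup₂_le hbound

end Shift

/-- if the members of an admissible family of signed charges are countably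
sub-additive and `μ_F ≥ -λ` for some finite (nonnegative, countably additive) measure `λ`,
then `μ_F` is a signed measure. -/
theorem statement5 {Ω J : Type*} (S : Set (Set Ω)) (hS : MeasureTheory.IsSetSemiring S)
    (ν : J → Set Ω → EReal) (hν : ∀ j, IsCharge S (ν j)) (hadm : Admissible S ν)
    (hsub : ∀ j, CountablySubadditiveE S (ν j))
    (lam : Set Ω → ℝ) (hlam : IsRealCharge S lam) (hlam0 : ∀ A ∈ S, 0 ≤ lam A)
    (hlamca : CountablyAdditiveR S lam)
    (hge : ∀ A ∈ S, -(lam A : EReal) ≤ supFun S ν A) :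
    IsCharge S (supFun S ν) ∧ CountablyAdditiveE S (supFun S ν) := by
  refine ⟨⟨?_, ?_, Or.inr fun A hA h => ?_⟩, fun A hA hd hU => ?_⟩
  · simpa using supFun_biUnion hS hν hadm (∅ : Finset ℕ) (fun _ => ∅) (by simp) (by simp)
  · intro n A hA hd _
    simpa using supFun_biUnion hS hν hadm Finset.univ A (hd.set_pairwise _) (fun i _ => hA i)
  · have := hge A hA
    rw [h, le_bot_iff, ← EReal.coe_neg] at this
    exact EReal.coe_ne_bot _ this
  · have hκ := addContent_iUnion_eq_tsum_of_disjoint_of_addContent_iUnion_le hS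
      (m := shift hS hν hadm hlam hge) (shift_iUnion_le hS hν hadm hlam hge hsub hlamca)
      A hA hU hd
    have hs := hasSum_coe_add (hlamca A hA hd hU).neg
      (hasSum_coe_ennreal fun n => shift hS hν hadm hlam hge (A n))
    rw [← hκ] at hs
    have hsub' : ∀ B ∈ S, ((-lam B : ℝ) : EReal) + (shift hS hν hadm hlam hge B : EReal) =
        supFun S ν B := fun B hB => by
      rw [coe_shift hS hν hadm hlam hge hB, add_comm, EReal.coe_neg, ← sub_eq_add_neg,
        EReal.add_sub_cancel_right]
    rw [hsub' _ hU] at hs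
    simp_rw [hsub' _ (hA _)] at hs
    exact hs.tsum_eq.symm

end SignedCharges
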